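/- Let X be a real Banach space, let E be a finite-dimensional linear subspace of X, and let F be a closed linear subspace of X that is simultaneously strongly proximinal. Then E + F is simultaneously strongly proximinal. -/

import Mathlib

/-!
A minimizing sequence in `E + F` is bounded, so its classes modulo `F` form a bounded sequence in
the finite-dimensional image of `E` in `X ⧸ F`. Hence a subsequence approaches a single coset
`e + F` with `e ∈ E`, and replacing it by nearby points of that coset keeps it minimizing. So
`e + F`, which inherits strong proximinality from `F`, is at the same distance from the given set
as `E + F`, and the best approximations in it are best in `E + F`: the sequence comes close to them.
-/

open Filter Topology Pointwise

variable {X : Type*} [NormedAddCommGroup X] [NormedSpace ℝ X]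

/-- `simSup A y = sup_{a ∈ A} ‖a - y‖`. -/
noncomputable def simSup (A : Set X) (y : X) : ℝ := ⨆ a : A, ‖(a : X) - y‖

/-- `simDist A C = inf_{y ∈ C} sup_{a ∈ A} ‖a - y‖`. -/
noncomputable def simDist (A C : Set X) : ℝ := ⨅ y : C, simSup A (y : X)

/-- The set of best simultaneous approximations `P_C(A)`. -/
def simBest (A C : Set X) : Set X := {y | y ∈ C ∧ simSup A y = simDist A C}

/-- The set `P_C(A, δ)`. -/
def simBestApprox (A C : Set X) (δ : ℝ) : Set X :=
  {y | y ∈ C ∧ simSup A y < simDist A C + δ}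

/-- `C` is simultaneously proximinal. -/
def SimProximinal (C : Set X) : Prop :=
  ∀ A : Set X, A.Nonempty → Bornology.IsBounded A → (simBest A C).Nonempty

/-- `y` is a minimizing sequence in `C` for `A`. -/
def IsMinimizing (A C : Set X) (y : ℕ → X) : Prop :=
  (∀ n, y n ∈ C) ∧ Tendsto (fun n => simSup A (y n)) atTop (𝓝 (simDist A C))

/-- Weak convergence of a sequence. -/
def WeakTendsto (y : ℕ → X) (c : X) : Prop :=
  ∀ f : X →L[ℝ] ℝ, Tendsto (fun n => f (y n)) atTop (𝓝 (f c))

/-- `C` is simultaneously approximatively compact. -/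
def SimApproxCompact (C : Set X) : Prop :=
  ∀ A : Set X, A.Nonempty → Bornology.IsBounded A → ∀ y : ℕ → X, IsMinimizing A C y →
    ∃ c ∈ C, ∃ φ : ℕ → ℕ, StrictMono φ ∧ Tendsto (y ∘ φ) atTop (𝓝 c)

/-- `C` is simultaneously approximatively weakly compact. -/
def SimApproxWeakCompact (C : Set X) : Prop :=
  ∀ A : Set X, A.Nonempty → Bornology.IsBounded A → ∀ y : ℕ → X, IsMinimizing A C y →
    ∃ c ∈ C, ∃ φ : ℕ → ℕ, StrictMono φ ∧ WeakTendsto (y ∘ φ) c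

/-- `C` is simultaneously strongly proximinal. -/
def SimStronglyProximinal (C : Set X) : Prop :=
  SimProximinal C ∧ ∀ A : Set X, A.Nonempty → Bornology.IsBounded A → ∀ ε > (0 : ℝ),
    ∃ δ > (0 : ℝ), simBestApprox A C δ ⊆ simBest A C + Metric.closedBall (0 : X) ε

/-- `C` is simultaneously weakly strongly proximinal. -/
def SimWeakStronglyProximinal (C : Set X) : Prop :=
  SimProximinal C ∧ ∀ A : Set X, A.Nonempty → Bornology.IsBounded A →
    ∀ V : Set X, V ∈ 𝓝 (0 : WeakSpace ℝ X) → ∃ δ > (0 : ℝ),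
      simBestApprox A C δ ⊆ simBest A C + V

lemma exists_seq_mem_tendsto_dist_zero {α : Type*} [PseudoMetricSpace α] {s : Set α}
    (hs : s.Nonempty) {y : ℕ → α}
    (hy : Tendsto (fun n => Metric.infDist (y n) s) atTop (𝓝 0)) :
    ∃ z : ℕ → α, (∀ n, z n ∈ s) ∧ Tendsto (fun n => dist (y n) (z n)) atTop (𝓝 0) := by
  have hnear (n : ℕ) : ∃ z ∈ s, dist (y n) z < Metric.infDist (y n) s + 1 / ((n : ℝ) + 1) :=
    (Metric.infDist_lt_iff hs).1 (lt_add_of_pos_right _ Nat.one_div_pos_of_nat)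
  choose z hzs hz using hnear
  have hbound := hy.add (tendsto_one_div_add_atTop_nhds_zero_nat (𝕜 := ℝ))
  rw [add_zero] at hbound
  exact ⟨z, hzs, squeeze_zero (fun _ => dist_nonneg) (fun n => (hz n).le) hbound⟩

lemma mem_add_closedBall_zero_iff {W : Type*} [SeminormedAddCommGroup W] {s : Set W} {y : W}
    {ε : ℝ} : y ∈ s + Metric.closedBall (0 : W) ε ↔ ∃ p ∈ s, dist y p ≤ ε := by
  refine ⟨?_, fun ⟨p, hp, hyp⟩ => ⟨p, hp, y - p, ?_, add_sub_cancel p y⟩⟩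
  · rintro ⟨p, hp, b, hb, rfl⟩
    exact ⟨p, hp, by simpa using hb⟩
  · rwa [mem_closedBall_zero_iff, ← dist_eq_norm]

lemma infDist_vadd_eq_norm_mk_sub {R W : Type*} [Ring R] [SeminormedAddCommGroup W] [Module R W]
    (F : Submodule R W) (y e : W) :
    Metric.infDist y (e +ᵥ (F : Set W)) = ‖(Submodule.Quotient.mk (y - e) : W ⧸ F)‖ := by
  have hnorm : ‖(Submodule.Quotient.mk (y - e) : W ⧸ F)‖ = Metric.infDist (y - e) (F : Set W) :=
    QuotientAddGroup.norm_mk (S := F.toAddSubgroup) (y - e)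
  rw [hnorm, ← Metric.infDist_image (isometry_vadd W e) (x := y - e), Set.image_vadd, vadd_eq_add,
    add_sub_cancel]

section Normed

variable {V : Type*} [NormedAddCommGroup V] {A C D : Set V}

lemma simSup_nonneg (A : Set V) (y : V) : 0 ≤ simSup A y :=
  Real.iSup_nonneg fun _ => norm_nonneg _

lemma simSup_singleton (x y : V) : simSup {x} y = dist x y := by
  simp [simSup, dist_eq_norm]

lemma norm_sub_le_simSup (hA : Bornology.IsBounded A) {a : V} (ha : a ∈ A) (y : V) :
    ‖a - y‖ ≤ simSup A y := by
  obtain ⟨R, hR⟩ := hA.exists_norm_le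
  have hbdd : BddAbove (Set.range fun a : A => ‖(a : V) - y‖) := by
    refine ⟨R + ‖y‖, ?_⟩
    rintro _ ⟨a, rfl⟩
    exact (norm_sub_le _ _).trans (by gcongr; exact hR a a.2)
  exact le_ciSup hbdd ⟨a, ha⟩

lemma lipschitzWith_simSup (hA : Bornology.IsBounded A) : LipschitzWith 1 (simSup A) := by
  refine LipschitzWith.of_le_add fun y z => Real.iSup_le (fun a => ?_) ?_
  · calc ‖(a : V) - y‖ ≤ ‖(a : V) - z‖ + dist y z := by
          simpa only [dist_eq_norm, norm_sub_rev z y] using norm_sub_le_norm_sub_add_norm_sub _ z y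
      _ ≤ simSup A z + dist y z := by gcongr; exact norm_sub_le_simSup hA a.2 z
  · exact add_nonneg (simSup_nonneg A z) dist_nonneg

lemma simDist_le_simSup {y : V} (hy : y ∈ C) : simDist A C ≤ simSup A y :=
  ciInf_le (f := fun y : C => simSup A (y : V))
    ⟨0, Set.forall_mem_range.2 fun y => simSup_nonneg A y⟩ ⟨y, hy⟩

lemma simDist_anti (hC : C.Nonempty) (hCD : C ⊆ D) : simDist A D ≤ simDist A C :=
  have := hC.to_subtype
  le_ciInf fun y => simDist_le_simSup (hCD y.2)

lemma simDist_singleton (x : V) (C : Set V) : simDist {x} C = Metric.infDist x C := by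
  simp only [simDist, simSup_singleton, Metric.infDist_eq_iInf]

lemma simBestApprox_nonempty (A : Set V) (hC : C.Nonempty) {δ : ℝ} (hδ : 0 < δ) :
    (simBestApprox A C δ).Nonempty := by
  have := hC.to_subtype
  obtain ⟨y, hy⟩ := exists_lt_of_ciInf_lt (lt_add_of_pos_right (simDist A C) hδ)
  exact ⟨y, y.2, hy⟩

lemma SimProximinal.nonempty (hC : SimProximinal C) : C.Nonempty :=
  (hC {0} (Set.singleton_nonempty 0) Bornology.isBounded_singleton).mono fun _ hy => hy.1

lemma SimProximinal.isClosed (hC : SimProximinal C) : IsClosed C := by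
  refine isClosed_of_closure_subset fun x hx => ?_
  obtain ⟨y, hyC, hy⟩ := hC {x} (Set.singleton_nonempty x) Bornology.isBounded_singleton
  rw [simSup_singleton, simDist_singleton, Metric.infDist_zero_of_mem_closure hx, dist_eq_zero]
    at hy
  rwa [hy]

lemma simSup_vadd (e : V) (A : Set V) (y : V) : simSup (e +ᵥ A) (e +ᵥ y) = simSup A y := by
  have hsup (B : Set V) (z : V) : simSup B z = sSup ((fun b => ‖b - z‖) '' B) :=
    (sSup_image' (f := fun b => ‖b - z‖)).symm
  simp only [hsup, ← Set.image_vadd, Set.image_image, vadd_eq_add, add_sub_add_left_eq_sub]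

lemma simDist_vadd (e : V) (A C : Set V) : simDist (e +ᵥ A) (e +ᵥ C) = simDist A C := by
  simp only [simDist, ← sInf_image', ← Set.image_vadd (t := C), Set.image_image, simSup_vadd]

lemma simBest_vadd (e : V) (A C : Set V) : simBest (e +ᵥ A) (e +ᵥ C) = e +ᵥ simBest A C := by
  ext y
  obtain ⟨y, rfl⟩ := (AddAction.bijective e).surjective y
  rw [Set.vadd_mem_vadd_set_iff]
  simp only [simBest, Set.mem_ofPred_eq, Set.vadd_mem_vadd_set_iff, simDist_vadd, simSup_vadd]

lemma simBestApprox_vadd (e : V) (A C : Set V) (δ : ℝ) :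
    simBestApprox (e +ᵥ A) (e +ᵥ C) δ = e +ᵥ simBestApprox A C δ := by
  ext y
  obtain ⟨y, rfl⟩ := (AddAction.bijective e).surjective y
  rw [Set.vadd_mem_vadd_set_iff]
  simp only [simBestApprox, Set.mem_ofPred_eq, Set.vadd_mem_vadd_set_iff, simDist_vadd,
    simSup_vadd]

lemma SimProximinal.vadd (hC : SimProximinal C) (e : V) : SimProximinal (e +ᵥ C) := by
  intro A hne hA
  rw [← vadd_neg_vadd e A, simBest_vadd]
  exact (hC _ hne.vadd_set (hA.vadd (-e))).vadd_set

lemma SimStronglyProximinal.vadd (hC : SimStronglyProximinal C) (e : V) :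
    SimStronglyProximinal (e +ᵥ C) := by
  refine ⟨hC.1.vadd e, fun A hne hA ε hε => ?_⟩
  obtain ⟨δ, hδ, hsub⟩ := hC.2 _ hne.vadd_set (hA.vadd (-e)) ε hε
  refine ⟨δ, hδ, ?_⟩
  rw [← vadd_neg_vadd e A, simBestApprox_vadd, simBest_vadd, vadd_add_assoc]
  exact Set.vadd_set_mono hsub

namespace IsMinimizing

variable {y z : ℕ → V}

lemma of_mem_simBestApprox (hy : ∀ n : ℕ, y n ∈ simBestApprox A C (1 / ((n : ℝ) + 1))) :
    IsMinimizing A C y := by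
  refine ⟨fun n => (hy n).1, ?_⟩
  have hbound := (tendsto_one_div_add_atTop_nhds_zero_nat (𝕜 := ℝ)).const_add (simDist A C)
  rw [add_zero] at hbound
  exact tendsto_of_tendsto_of_tendsto_of_le_of_le tendsto_const_nhds hbound
    (fun n => simDist_le_simSup (hy n).1) fun n => (hy n).2.le

lemma comp (hy : IsMinimizing A C y) {φ : ℕ → ℕ} (hφ : StrictMono φ) :
    IsMinimizing A C (y ∘ φ) :=
  ⟨fun n => hy.1 (φ n), hy.2.comp hφ.tendsto_atTop⟩

lemma isBounded_range (hy : IsMinimizing A C y) (hne : A.Nonempty) (hA : Bornology.IsBounded A) :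
    Bornology.IsBounded (Set.range y) := by
  obtain ⟨a, ha⟩ := hne
  obtain ⟨M, hM⟩ := hy.2.bddAbove_range
  refine (Metric.isBounded_closedBall (x := a) (r := M)).subset ?_
  rintro _ ⟨n, rfl⟩
  rw [mem_closedBall_iff_norm']
  exact (norm_sub_le_simSup hA ha (y n)).trans (hM ⟨n, rfl⟩)

lemma of_tendsto_dist_zero (hy : IsMinimizing A C y) (hA : Bornology.IsBounded A)
    (hz : ∀ n, z n ∈ C) (hyz : Tendsto (fun n => dist (y n) (z n)) atTop (𝓝 0)) :
    IsMinimizing A C z := by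
  have hsup : Tendsto (fun n => dist (simSup A (y n)) (simSup A (z n))) atTop (𝓝 0) :=
    squeeze_zero (fun _ => dist_nonneg)
      (fun n => by simpa using (lipschitzWith_simSup hA).dist_le_mul (y n) (z n)) hyz
  exact ⟨hz, (tendsto_iff_of_dist hsup).1 hy.2⟩

lemma simDist_eq_of_subset (hz : IsMinimizing A D z) (hCD : C ⊆ D) (hzC : ∀ n, z n ∈ C) :
    simDist A C = simDist A D :=
  (ge_of_tendsto' hz.2 fun n => simDist_le_simSup (hzC n)).antisymm
    (simDist_anti ⟨z 0, hzC 0⟩ hCD)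

lemma eventually_mem_simBest_add (hy : IsMinimizing A C y) (hC : SimStronglyProximinal C)
    (hne : A.Nonempty) (hA : Bornology.IsBounded A) {ε : ℝ} (hε : 0 < ε) :
    ∀ᶠ n in atTop, y n ∈ simBest A C + Metric.closedBall (0 : V) ε := by
  obtain ⟨δ, hδ, hsub⟩ := hC.2 A hne hA ε hε
  filter_upwards [hy.2.eventually_lt_const (lt_add_of_pos_right _ hδ)] with n hn
  exact hsub ⟨hy.1 n, hn⟩

lemma exists_mem_simBest_add_of_infDist (hy : IsMinimizing A D y) (hne : A.Nonempty)
    (hA : Bornology.IsBounded A) (hC : SimStronglyProximinal C) (hCD : C ⊆ D)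
    (hyC : Tendsto (fun n => Metric.infDist (y n) C) atTop (𝓝 0)) {ε : ℝ} (hε : 0 < ε) :
    ∃ n, y n ∈ simBest A D + Metric.closedBall (0 : V) ε := by
  obtain ⟨z, hzC, hyz⟩ := exists_seq_mem_tendsto_dist_zero hC.1.nonempty hyC
  have hzD : IsMinimizing A D z := hy.of_tendsto_dist_zero hA (fun n => hCD (hzC n)) hyz
  have hdist : simDist A C = simDist A D := hzD.simDist_eq_of_subset hCD hzC
  have hz : IsMinimizing A C z := ⟨hzC, hdist ▸ hzD.2⟩
  obtain ⟨n, hzn, hyzn⟩ := ((hz.eventually_mem_simBest_add hC hne hA (half_pos hε)).and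
    (hyz.eventually_lt_const (half_pos hε))).exists
  obtain ⟨p, ⟨hpC, hp⟩, hzp⟩ := mem_add_closedBall_zero_iff.1 hzn
  refine ⟨n, mem_add_closedBall_zero_iff.2 ⟨p, ⟨hCD hpC, hp.trans hdist⟩, ?_⟩⟩
  linarith [dist_triangle (y n) (z n) p]

end IsMinimizing

lemma simStronglyProximinal_of_forall_isMinimizing (hC : C.Nonempty)
    (h : ∀ A : Set V, A.Nonempty → Bornology.IsBounded A → ∀ y : ℕ → V, IsMinimizing A C y →
      ∀ ε > (0 : ℝ), ∃ n, y n ∈ simBest A C + Metric.closedBall (0 : V) ε) :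
    SimStronglyProximinal C := by
  have hstrong : ∀ A : Set V, A.Nonempty → Bornology.IsBounded A → ∀ ε > (0 : ℝ),
      ∃ δ > (0 : ℝ), simBestApprox A C δ ⊆ simBest A C + Metric.closedBall (0 : V) ε := by
    intro A hne hA ε hε
    by_contra! hfar
    choose y hy hy_far using fun n : ℕ =>
      Set.not_subset.1 (hfar (1 / ((n : ℝ) + 1)) Nat.one_div_pos_of_nat)
    obtain ⟨n, hn⟩ := h A hne hA y (.of_mem_simBestApprox hy) ε hε
    exact hy_far n hn
  refine ⟨fun A hne hA => ?_, hstrong⟩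
  obtain ⟨δ, hδ, hsub⟩ := hstrong A hne hA 1 one_pos
  exact ((simBestApprox_nonempty A hC hδ).mono hsub).of_add_left

theorem simStronglyProximinal_of_subseq_tendsto_infDist (hD : D.Nonempty)
    (h : ∀ y : ℕ → V, (∀ n, y n ∈ D) → Bornology.IsBounded (Set.range y) →
      ∃ C ⊆ D, SimStronglyProximinal C ∧ ∃ φ : ℕ → ℕ, StrictMono φ ∧
        Tendsto (fun n => Metric.infDist (y (φ n)) C) atTop (𝓝 0)) :
    SimStronglyProximinal D := by
  refine simStronglyProximinal_of_forall_isMinimizing hD fun A hne hA y hy ε hε => ?_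
  obtain ⟨C, hCD, hC, φ, hφ, hyC⟩ := h y hy.1 (hy.isBounded_range hne hA)
  obtain ⟨n, hn⟩ := (hy.comp hφ).exists_mem_simBest_add_of_infDist hne hA hC hCD hyC hε
  exact ⟨φ n, hn⟩

end Normed

section FiniteDimensional

variable {𝕜 V : Type*} [NontriviallyNormedField 𝕜] [LocallyCompactSpace 𝕜]
  [NormedAddCommGroup V] [NormedSpace 𝕜 V]

lemma exists_subseq_tendsto_infDist_vadd (E F : Submodule 𝕜 V) [FiniteDimensional 𝕜 E]
    (hF : IsClosed (F : Set V)) {y : ℕ → V} (hy : ∀ n, y n ∈ (E : Set V) + (F : Set V))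
    (hbdd : Bornology.IsBounded (Set.range y)) :
    ∃ e ∈ E, ∃ φ : ℕ → ℕ, StrictMono φ ∧
      Tendsto (fun n => Metric.infDist (y (φ n)) (e +ᵥ (F : Set V))) atTop (𝓝 0) := by
  have : IsClosed (F : Set V) := hF
  have : ProperSpace (E.map F.mkQ) := FiniteDimensional.proper 𝕜 _
  have hmem (n : ℕ) : F.mkQ (y n) ∈ E.map F.mkQ := by
    obtain ⟨e, he, f, hf, hef⟩ := hy n
    exact ⟨e, he, (Submodule.Quotient.eq F).2 (by simpa [← hef] using hf)⟩
  obtain ⟨R, hR⟩ := hbdd.exists_norm_le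
  have hball (n : ℕ) : (⟨F.mkQ (y n), hmem n⟩ : E.map F.mkQ) ∈ Metric.closedBall 0 R :=
    mem_closedBall_zero_iff.2 ((Submodule.Quotient.norm_mk_le F (y n)).trans (hR _ ⟨n, rfl⟩))
  obtain ⟨⟨_, e, he, rfl⟩, -, φ, hφ, hlim⟩ :=
    tendsto_subseq_of_bounded Metric.isBounded_closedBall hball
  refine ⟨e, he, φ, hφ, ?_⟩
  simp only [infDist_vadd_eq_norm_mk_sub]
  exact tendsto_iff_norm_sub_tendsto_zero.1 hlim

theorem findim_add_simStronglyProximinal_subspace_general (E F : Submodule 𝕜 V)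
    [FiniteDimensional 𝕜 E] (hF : SimStronglyProximinal (F : Set V)) :
    SimStronglyProximinal ((E : Set V) + (F : Set V)) := by
  refine simStronglyProximinal_of_subseq_tendsto_infDist
    (E.nonempty.add F.nonempty) fun y hy hbdd => ?_
  obtain ⟨e, he, φ, hφ, hlim⟩ := exists_subseq_tendsto_infDist_vadd E F hF.1.isClosed hy hbdd
  exact ⟨e +ᵥ (F : Set V), Set.vadd_set_subset_add he, hF.vadd e, φ, hφ, hlim⟩

end FiniteDimensional

/-- The sum of a finite-dimensional subspace and a simultaneously strongly proximinal closed
subspace is simultaneously strongly proximinal. -/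
theorem findim_add_simStronglyProximinal_subspace [CompleteSpace X]
    (E F : Subspace ℝ X) [FiniteDimensional ℝ E] (hF : IsClosed (F : Set X))
    (hFsp : SimStronglyProximinal (F : Set X)) :
    SimStronglyProximinal ((E : Set X) + (F : Set X)) :=
  findim_add_simStronglyProximinal_subspace_general E F hFsp
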